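/- arXiv:2101.02195 — 5 statements merged into one kernel-verified Lean document; each statement's English description precedes it below -/
import Mathlib

section
/- Suppose A, B ∈ ℝ^{d×d} are symmetric positive definite matrices with A − B positive semidefinite. Then for any x ∈ ℝ^d, √(xᵀ A x) ≤ √(xᵀ B x) · √(det(A)/det(B)). -/
open Matrix

/-!
Conjugating by an invertible `S` with `B = Sᴴ * S` reduces the theorem to `B = 1`, since the
determinant ratio is unchanged by conjugation. If `1 ≤ Q`, then all eigenvalues of `Q` are at
least `1`, so each of them is at most their product `det Q`, that is, `Q ≤ det Q • 1`.
-/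

theorem star_left_conjugate_le_conjugate_iff_of_isUnit {R : Type*} [Ring R] [PartialOrder R]
    [StarRing R] [StarOrderedRing R] {u a b : R} (hu : IsUnit u) :
    star u * a * u ≤ star u * b * u ↔ a ≤ b := by
  rw [← sub_nonneg, ← sub_mul, ← mul_sub, hu.star_left_conjugate_nonneg_iff, sub_nonneg]

theorem exists_eq_star_left_conjugate_of_isUnit {M : Type*} [Monoid M] [StarMul M] {u : M}
    (hu : IsUnit u) (a : M) : ∃ b, star u * b * u = a := by
  lift u to Mˣ using hu
  exact ⟨↑(star u)⁻¹ * a * ↑u⁻¹, by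
    simp only [← Units.coe_star, mul_assoc, Units.inv_mul, mul_one, Units.mul_inv_cancel_left]⟩

section LoewnerOrder

open scoped MatrixOrder ComplexOrder

variable {n 𝕜 : Type*} [Fintype n] [RCLike 𝕜]

theorem star_dotProduct_mulVec_mono {A B : Matrix n n 𝕜} (h : A ≤ B) (x : n → 𝕜) :
    star x ⬝ᵥ A *ᵥ x ≤ star x ⬝ᵥ B *ᵥ x := by
  have := (le_iff.mp h).dotProduct_mulVec_nonneg x
  rwa [sub_mulVec, dotProduct_sub, sub_nonneg] at this

variable [DecidableEq n]

theorem one_le_iff_one_le_eigenvalues {Q : Matrix n n 𝕜} (hQ : Q.IsHermitian) :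
    1 ≤ Q ↔ ∀ i, 1 ≤ hQ.eigenvalues i := by
  rw [CFC.one_le_iff (R := ℝ) Q hQ, hQ.spectrum_real_eq_range_eigenvalues, Set.forall_mem_range]

theorem le_smul_one_iff_eigenvalues_le {Q : Matrix n n 𝕜} (hQ : Q.IsHermitian) {r : ℝ} :
    Q ≤ (r : 𝕜) • 1 ↔ ∀ i, hQ.eigenvalues i ≤ r := by
  rw [← RCLike.real_smul_eq_coe_smul, ← Algebra.algebraMap_eq_smul_one,
    le_algebraMap_iff_spectrum_le hQ, hQ.spectrum_real_eq_range_eigenvalues, Set.forall_mem_range]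

theorem le_det_smul_one_of_one_le {Q : Matrix n n 𝕜} (h : 1 ≤ Q) : Q ≤ Q.det • 1 := by
  have hQ : Q.IsHermitian := (zero_le_one.trans h).posSemidef.isHermitian
  have one_le_eigenvalues := (one_le_iff_one_le_eigenvalues hQ).mp h
  rw [hQ.det_eq_prod_eigenvalues, ← RCLike.ofReal_prod, le_smul_one_iff_eigenvalues_le hQ]
  intro i
  rw [← Finset.prod_singleton hQ.eigenvalues i]
  exact Finset.prod_le_prod_of_subset_of_one_le (Finset.subset_univ _)
    (fun j _ ↦ zero_le_one.trans (one_le_eigenvalues j)) (fun j _ _ ↦ one_le_eigenvalues j)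

theorem le_det_div_det_smul_of_le {A B : Matrix n n 𝕜} (hB : B.PosDef) (h : B ≤ A) :
    A ≤ (A.det / B.det) • B := by
  obtain ⟨S, hS, rfl⟩ :=
    CStarAlgebra.isStrictlyPositive_iff_eq_star_mul_self.mp hB.isStrictlyPositive
  obtain ⟨Q, rfl⟩ := exists_eq_star_left_conjugate_of_isUnit hS A
  have one_le : 1 ≤ Q := by
    rwa [← star_left_conjugate_le_conjugate_iff_of_isUnit hS, mul_one]
  have det_ratio : (star S * Q * S).det / (star S * S).det = Q.det := by
    rw [div_eq_iff hB.det_pos.ne', det_mul, det_mul, det_mul]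
    ring
  calc star S * Q * S ≤ star S * (Q.det • 1) * S :=
        star_left_conjugate_le_conjugate (le_det_smul_one_of_one_le one_le) S
    _ = Q.det • (star S * S) := by rw [Matrix.mul_smul, mul_one, Matrix.smul_mul]
    _ = ((star S * Q * S).det / (star S * S).det) • (star S * S) := by rw [det_ratio]

theorem stmt_3_general {A B : Matrix n n 𝕜} (hB : B.PosDef) (hAB : (A - B).PosSemidef)
    (x : n → 𝕜) :
    √(RCLike.re (star x ⬝ᵥ A *ᵥ x)) ≤
      √(RCLike.re (star x ⬝ᵥ B *ᵥ x)) * √(RCLike.re (A.det / B.det)) := by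
  have hA : A.PosDef := by simpa only [add_sub_cancel] using hB.add_posSemidef hAB
  obtain ⟨ratio_re_nonneg, ratio_im⟩ :=
    RCLike.nonneg_iff.mp (div_nonneg hA.det_pos.le hB.det_pos.le)
  rw [← Real.sqrt_mul' _ ratio_re_nonneg]
  refine Real.sqrt_le_sqrt ?_
  calc RCLike.re (star x ⬝ᵥ A *ᵥ x)
      ≤ RCLike.re (star x ⬝ᵥ ((A.det / B.det) • B) *ᵥ x) :=
        RCLike.re_le_re (star_dotProduct_mulVec_mono (le_det_div_det_smul_of_le hB hAB) x)
    _ = RCLike.re (star x ⬝ᵥ B *ᵥ x) * RCLike.re (A.det / B.det) := by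
        rw [smul_mulVec, dotProduct_smul, smul_eq_mul, RCLike.mul_re, ratio_im, zero_mul, sub_zero,
          mul_comm]

end LoewnerOrder

/-- If `A, B ∈ ℝ^{d×d}` are symmetric positive definite and
`A - B` is positive semidefinite, then for any `x ∈ ℝ^d`,
`‖x‖_A ≤ ‖x‖_B · √(det A / det B)`, where `‖x‖_M = √(xᵀ M x)`. -/
theorem stmt_3 (d : ℕ) (A B : Matrix (Fin d) (Fin d) ℝ)
    (hA : A.PosDef) (hB : B.PosDef) (hAB : (A - B).PosSemidef)
    (x : Fin d → ℝ) :
    Real.sqrt (x ⬝ᵥ A.mulVec x) ≤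
      Real.sqrt (x ⬝ᵥ B.mulVec x) * Real.sqrt (A.det / B.det) :=
  stmt_3_general hB hAB x
end

section
/- Let Λ_0 ∈ ℝ^{d×d} be symmetric positive definite, let φ_1, φ_2, … be vectors in ℝ^d, and set Λ_i = Λ_0 + Σ_{j=1}^{i−1} φ_j φ_jᵀ for i ≥ 1 (so Λ_1 = Λ_0). Then for every t ≥ 1, Σ_{i=1}^t min{1, φ_iᵀ Λ_i^{−1} φ_i} ≤ 2 log(det(Λ_{t+1})/det(Λ_1)). -/
open Matrix

/-!
By the matrix determinant lemma, a rank-one update `A ↦ A + v vᴴ` multiplies `det A` by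
`1 + vᴴ A⁻¹ v`. Since `min 1 x ≤ 2 log (1 + x)` for `x ≥ 0`, each summand is at most twice the
corresponding increment of `log det`, and these increments telescope.
-/

theorem min_one_le_two_mul_log_one_add {x : ℝ} (hx : 0 ≤ x) :
    min 1 x ≤ 2 * Real.log (1 + x) := by
  have rational_bound : min 1 x ≤ 2 * (2 * x / (x + 2)) := by
    rw [← mul_div_assoc, le_div_iff₀ (by positivity)]
    rcases le_total 1 x with h | h
    · rw [min_eq_left h]
      linarith
    · rw [min_eq_right h]
      nlinarith
  have log_bound := Real.le_log_one_add_of_nonneg hx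
  linarith

section RankOneUpdate

variable {n : Type*} [Fintype n] [DecidableEq n]

theorem det_add_vecMulVec {R : Type*} [CommRing R] {A : Matrix n n R} (hA : IsUnit A.det)
    (u v : n → R) : (A + vecMulVec u v).det = A.det * (1 + v ⬝ᵥ A⁻¹ *ᵥ u) := by
  rw [vecMulVec_eq Unit, det_add_replicateCol_mul_replicateRow hA, det_unique (n := Unit),
    Matrix.mul_assoc, ← replicateCol_mulVec, Matrix.add_apply, one_apply_eq,
    replicateRow_mul_replicateCol_apply]

variable {𝕜 : Type*} [RCLike 𝕜]

open scoped ComplexOrder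

theorem min_one_le_two_mul_log_det_sub_log_det {A : Matrix n n 𝕜} (hA : A.PosDef) (v : n → 𝕜) :
    min 1 (RCLike.re (star v ⬝ᵥ A⁻¹ *ᵥ v)) ≤
      2 * (Real.log (RCLike.re (A + vecMulVec v (star v)).det) -
        Real.log (RCLike.re A.det)) := by
  obtain ⟨det_re_pos, det_im⟩ := RCLike.pos_iff.mp hA.det_pos
  have form_nonneg : 0 ≤ RCLike.re (star v ⬝ᵥ A⁻¹ *ᵥ v) :=
    hA.inv.posSemidef.re_dotProduct_nonneg v
  have det_update : RCLike.re (A + vecMulVec v (star v)).det =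
      RCLike.re A.det * (1 + RCLike.re (star v ⬝ᵥ A⁻¹ *ᵥ v)) := by
    rw [det_add_vecMulVec hA.det_pos.ne'.isUnit, RCLike.mul_re, det_im, zero_mul, sub_zero,
      map_add, RCLike.one_re]
  rw [det_update, Real.log_mul det_re_pos.ne' (by positivity), add_sub_cancel_left]
  exact min_one_le_two_mul_log_one_add form_nonneg

theorem sum_min_one_le_two_mul_log_det_div_det {A : ℕ → Matrix n n 𝕜} {v : ℕ → n → 𝕜}
    (h_zero : (A 0).PosDef) (h_succ : ∀ i, A (i + 1) = A i + vecMulVec (v i) (star (v i)))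
    (t : ℕ) :
    ∑ i ∈ Finset.range t, min 1 (RCLike.re (star (v i) ⬝ᵥ (A i)⁻¹ *ᵥ v i)) ≤
      2 * Real.log (RCLike.re (A t).det / RCLike.re (A 0).det) := by
  have posDef (i : ℕ) : (A i).PosDef := by
    induction i with
    | zero => exact h_zero
    | succ i ih => exact h_succ i ▸ ih.add_posSemidef (posSemidef_vecMulVec_self_star (v i))
  have det_re_ne_zero (i : ℕ) : RCLike.re (A i).det ≠ 0 :=
    (RCLike.pos_iff.mp (posDef i).det_pos).1.ne'
  calc
    _ ≤ ∑ i ∈ Finset.range t, 2 * (Real.log (RCLike.re (A (i + 1)).det) -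
          Real.log (RCLike.re (A i).det)) := by
      gcongr with i
      rw [h_succ]
      exact min_one_le_two_mul_log_det_sub_log_det (posDef i) (v i)
    _ = 2 * Real.log (RCLike.re (A t).det / RCLike.re (A 0).det) := by
      rw [← Finset.mul_sum, Finset.sum_range_sub fun i ↦ Real.log (RCLike.re (A i).det),
        Real.log_div (det_re_ne_zero t) (det_re_ne_zero 0)]

theorem stmt_4_general {Λ₀ : Matrix n n 𝕜} (hΛ₀ : Λ₀.PosDef) (φ : ℕ → n → 𝕜)
    {Λ : ℕ → Matrix n n 𝕜}
    (hΛ : ∀ i, Λ i = Λ₀ + ∑ j ∈ Finset.Icc 1 (i - 1), vecMulVec (φ j) (star (φ j))) (t : ℕ) :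
    ∑ i ∈ Finset.Icc 1 t, min 1 (RCLike.re (star (φ i) ⬝ᵥ (Λ i)⁻¹ *ᵥ φ i)) ≤
      2 * Real.log (RCLike.re (Λ (t + 1)).det / RCLike.re (Λ 1).det) := by
  have Λ_one : Λ 1 = Λ₀ := by simp [hΛ]
  have Λ_succ (i : ℕ) :
      Λ (i + 1 + 1) = Λ (i + 1) + vecMulVec (φ (i + 1)) (star (φ (i + 1))) := by
    rw [hΛ, hΛ, Nat.add_sub_cancel, Nat.add_sub_cancel, Finset.sum_Icc_succ_top (by lia),
      add_assoc]
  rw [← Finset.Ico_add_one_right_eq_Icc, Finset.sum_Ico_eq_sum_range, Nat.add_sub_cancel]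
  simp only [Nat.add_comm 1]
  exact sum_min_one_le_two_mul_log_det_div_det (A := fun i ↦ Λ (i + 1)) (Λ_one ▸ hΛ₀) Λ_succ t

end RankOneUpdate

/-- Let `Λ₀ ∈ ℝ^{d×d}` be symmetric positive definite,
`φ_1, φ_2, …` vectors in `ℝ^d`, and `Λ_i = Λ₀ + ∑_{j=1}^{i-1} φ_j φ_jᵀ`
(so `Λ_1 = Λ₀`). Then for every `t ≥ 1`,
`∑_{i=1}^t min{1, φ_iᵀ Λ_i⁻¹ φ_i} ≤ 2 log(det Λ_{t+1} / det Λ_1)`. -/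
theorem stmt_4 (d : ℕ) (Λ₀ : Matrix (Fin d) (Fin d) ℝ) (hΛ₀ : Λ₀.PosDef)
    (φ : ℕ → Fin d → ℝ)
    (Λ : ℕ → Matrix (Fin d) (Fin d) ℝ)
    (hΛ : ∀ i, Λ i = Λ₀ + ∑ j ∈ Finset.Icc 1 (i - 1), Matrix.vecMulVec (φ j) (φ j))
    (t : ℕ) (ht : 1 ≤ t) :
    ∑ i ∈ Finset.Icc 1 t, min 1 (φ i ⬝ᵥ (Λ i)⁻¹.mulVec (φ i)) ≤
      2 * Real.log ((Λ (t + 1)).det / (Λ 1).det) := by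
  simpa using stmt_4_general hΛ₀ φ (by simpa using hΛ) t
end

section
/- Let Λ_0 ∈ ℝ^{d×d} be symmetric positive definite with smallest eigenvalue at least 1, let φ_1, φ_2, … be vectors in ℝ^d with ‖φ_i‖₂ ≤ 1 for all i, and set Λ_i = Λ_0 + Σ_{j=1}^{i−1} φ_j φ_jᵀ for i ≥ 1 (so Λ_1 = Λ_0). Then for every t ≥ 1, log(det(Λ_{t+1})/det(Λ_1)) ≤ Σ_{i=1}^t φ_iᵀ Λ_i^{−1} φ_i ≤ 2 log(det(Λ_{t+1})/det(Λ_1)). -/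
open Matrix

/-!
By the matrix determinant lemma, the rank-one update `Λ ↦ Λ + φ φᵀ` multiplies the determinant
by `1 + x` with `x = φᵀ Λ⁻¹ φ`, so the logarithm of the determinant ratio telescopes to
`∑ log (1 + xᵢ)`. Since `log (1 + x) ≤ x` for `0 ≤ x` and `x ≤ 2 log (1 + x)` for `0 ≤ x ≤ 2`, it
remains to bound `xᵢ`: since `1 ≤ Λ₀ ≤ Λᵢ` in the Loewner order and inversion is antitone,
`xᵢ ≤ φᵢᵀ Λ₀⁻¹ φᵢ ≤ φᵢᵀ φᵢ ≤ 1`.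
-/

theorem le_two_mul_log_one_add {x : ℝ} (hx₀ : 0 ≤ x) (hx₂ : x ≤ 2) :
    x ≤ 2 * Real.log (1 + x) :=
  calc
    x ≤ 2 * (2 * x / (x + 2)) := by
      rw [← mul_div_assoc, le_div_iff₀ (by positivity)]
      nlinarith
    _ ≤ 2 * Real.log (1 + x) := by gcongr; exact Real.le_log_one_add_of_nonneg hx₀

section RankOneUpdate

variable {n : Type*} [Fintype n] [DecidableEq n]

theorem posSemidef_inv_sub_inv {K : Type*} [Field K] [PartialOrder K] [StarRing K]
    [StarOrderedRing K] {A B : Matrix n n K} (hA : A.PosDef) (hAB : (B - A).PosSemidef) :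
    (A⁻¹ - B⁻¹).PosSemidef := by
  have hB : B.PosDef := by simpa using hA.add_posSemidef hAB
  let := hA.isUnit.invertible
  let := hB.isUnit.invertible
  let := hA.inv.isUnit.invertible
  -- `B - A` and `A⁻¹ - B⁻¹` are the two Schur complements of one and the same block matrix.
  have block_posSemidef : (fromBlocks A⁻¹ 1 1ᴴ B).PosSemidef :=
    (PosDef.fromBlocks₁₁ 1 B hA.inv).2 (by simpa using hAB)
  simpa using (PosDef.fromBlocks₂₂ A⁻¹ 1 hB).1 block_posSemidef

theorem dotProduct_inv_mulVec_le {A B : Matrix n n ℝ} (hA : A.PosDef)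
    (hAB : (B - A).PosSemidef) (v : n → ℝ) : v ⬝ᵥ B⁻¹ *ᵥ v ≤ v ⬝ᵥ A⁻¹ *ᵥ v := by
  simpa [sub_mulVec, dotProduct_sub] using
    (posSemidef_inv_sub_inv hA hAB).dotProduct_mulVec_nonneg v

theorem dotProduct_inv_mulVec_le_dotProduct_self {A : Matrix n n ℝ} (hA : (A - 1).PosSemidef)
    (v : n → ℝ) : v ⬝ᵥ A⁻¹ *ᵥ v ≤ v ⬝ᵥ v := by
  simpa using dotProduct_inv_mulVec_le PosDef.one hA v

end RankOneUpdate

section DesignMatrix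

variable {n : Type*}

/-- The regularized design (Gram) matrix `Λ₀ + ∑_{j=1}^k φ_j φ_jᵀ` after `k` observations; the
matrix written `Λ_i` in the theorem is `designMatrix Λ₀ φ (i - 1)`. -/
def designMatrix (Λ₀ : Matrix n n ℝ) (φ : ℕ → n → ℝ) (k : ℕ) : Matrix n n ℝ :=
  Λ₀ + ∑ j ∈ Finset.Icc 1 k, vecMulVec (φ j) (φ j)

theorem designMatrix_zero (Λ₀ : Matrix n n ℝ) (φ : ℕ → n → ℝ) : designMatrix Λ₀ φ 0 = Λ₀ := by
  simp [designMatrix]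

theorem designMatrix_succ (Λ₀ : Matrix n n ℝ) (φ : ℕ → n → ℝ) (k : ℕ) :
    designMatrix Λ₀ φ (k + 1) =
      designMatrix Λ₀ φ k + vecMulVec (φ (k + 1)) (φ (k + 1)) := by
  rw [designMatrix, designMatrix, Finset.sum_Icc_succ_top (by lia), add_assoc]

theorem posSemidef_designMatrix_sub [Finite n] (Λ₀ : Matrix n n ℝ) (φ : ℕ → n → ℝ) (k : ℕ) :
    (designMatrix Λ₀ φ k - Λ₀).PosSemidef := by
  rw [designMatrix, add_sub_cancel_left]
  exact posSemidef_sum _ fun j _ => by simpa using posSemidef_vecMulVec_self_star (φ j)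

theorem posDef_designMatrix [Finite n] {Λ₀ : Matrix n n ℝ} (hΛ₀ : Λ₀.PosDef) (φ : ℕ → n → ℝ)
    (k : ℕ) : (designMatrix Λ₀ φ k).PosDef := by
  simpa using hΛ₀.add_posSemidef (posSemidef_designMatrix_sub Λ₀ φ k)

variable [Fintype n] [DecidableEq n] {Λ₀ : Matrix n n ℝ}

theorem dotProduct_inv_designMatrix_nonneg (hΛ₀ : Λ₀.PosDef) (φ : ℕ → n → ℝ) (k : ℕ)
    (v : n → ℝ) : 0 ≤ v ⬝ᵥ (designMatrix Λ₀ φ k)⁻¹ *ᵥ v := by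
  simpa using (posDef_designMatrix hΛ₀ φ k).inv.posSemidef.dotProduct_mulVec_nonneg v

theorem det_designMatrix (hΛ₀ : Λ₀.PosDef) (φ : ℕ → n → ℝ) (t : ℕ) :
    (designMatrix Λ₀ φ t).det =
      Λ₀.det * ∏ i ∈ Finset.Icc 1 t, (1 + φ i ⬝ᵥ (designMatrix Λ₀ φ (i - 1))⁻¹ *ᵥ φ i) := by
  induction t with
  | zero => simp [designMatrix_zero]
  | succ k ih =>
    rw [designMatrix_succ, det_add_vecMulVec (posDef_designMatrix hΛ₀ φ k).det_pos.ne'.isUnit, ih,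
      Finset.prod_Icc_succ_top (by lia), Nat.add_sub_cancel, mul_assoc]

theorem log_det_designMatrix_div_det (hΛ₀ : Λ₀.PosDef) (φ : ℕ → n → ℝ) (t : ℕ) :
    Real.log ((designMatrix Λ₀ φ t).det / Λ₀.det) =
      ∑ i ∈ Finset.Icc 1 t,
        Real.log (1 + φ i ⬝ᵥ (designMatrix Λ₀ φ (i - 1))⁻¹ *ᵥ φ i) := by
  rw [det_designMatrix hΛ₀, mul_div_cancel_left₀ _ hΛ₀.det_pos.ne', Real.log_prod]
  intro i _
  linarith [dotProduct_inv_designMatrix_nonneg hΛ₀ φ (i - 1) (φ i)]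

theorem log_det_designMatrix_div_det_le (hΛ₀ : Λ₀.PosDef) (φ : ℕ → n → ℝ) (t : ℕ) :
    Real.log ((designMatrix Λ₀ φ t).det / Λ₀.det) ≤
      ∑ i ∈ Finset.Icc 1 t, φ i ⬝ᵥ (designMatrix Λ₀ φ (i - 1))⁻¹ *ᵥ φ i := by
  rw [log_det_designMatrix_div_det hΛ₀]
  gcongr with i
  have hx := dotProduct_inv_designMatrix_nonneg hΛ₀ φ (i - 1) (φ i)
  linarith [Real.log_le_sub_one_of_pos (add_pos_of_pos_of_nonneg one_pos hx)]

theorem sum_dotProduct_inv_designMatrix_le (hΛ₀ : Λ₀.PosDef) {φ : ℕ → n → ℝ} {t : ℕ}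
    (hφ : ∀ i ∈ Finset.Icc 1 t, φ i ⬝ᵥ Λ₀⁻¹ *ᵥ φ i ≤ 2) :
    ∑ i ∈ Finset.Icc 1 t, φ i ⬝ᵥ (designMatrix Λ₀ φ (i - 1))⁻¹ *ᵥ φ i ≤
      2 * Real.log ((designMatrix Λ₀ φ t).det / Λ₀.det) := by
  rw [log_det_designMatrix_div_det hΛ₀, Finset.mul_sum]
  gcongr with i hi
  exact le_two_mul_log_one_add (dotProduct_inv_designMatrix_nonneg hΛ₀ φ (i - 1) (φ i))
    ((dotProduct_inv_mulVec_le hΛ₀ (posSemidef_designMatrix_sub Λ₀ φ (i - 1)) (φ i)).trans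
      (hφ i hi))

end DesignMatrix

theorem stmt_5_general {n : Type*} [Fintype n] [DecidableEq n] {Λ₀ : Matrix n n ℝ}
    (hΛ₀ : Λ₀.PosDef) {φ : ℕ → n → ℝ} {t : ℕ}
    (hφ : ∀ i ∈ Finset.Icc 1 t, φ i ⬝ᵥ Λ₀⁻¹ *ᵥ φ i ≤ 2)
    {Λ : ℕ → Matrix n n ℝ}
    (hΛ : ∀ i, Λ i = Λ₀ + ∑ j ∈ Finset.Icc 1 (i - 1), vecMulVec (φ j) (φ j)) :
    Real.log ((Λ (t + 1)).det / (Λ 1).det) ≤ ∑ i ∈ Finset.Icc 1 t, φ i ⬝ᵥ (Λ i)⁻¹ *ᵥ φ i ∧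
      ∑ i ∈ Finset.Icc 1 t, φ i ⬝ᵥ (Λ i)⁻¹ *ᵥ φ i ≤
        2 * Real.log ((Λ (t + 1)).det / (Λ 1).det) := by
  obtain rfl : Λ = fun i => designMatrix Λ₀ φ (i - 1) := funext hΛ
  simp only [Nat.add_sub_cancel, Nat.sub_self, designMatrix_zero]
  exact ⟨log_det_designMatrix_div_det_le hΛ₀ φ t, sum_dotProduct_inv_designMatrix_le hΛ₀ hφ⟩

/-- Let `Λ₀ ∈ ℝ^{d×d}` be symmetric positive definite with
smallest eigenvalue at least `1` (i.e. `Λ₀ - I` is positive semidefinite),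
let `φ_1, φ_2, …` be vectors in `ℝ^d` with `‖φ_i‖₂ ≤ 1`, and
`Λ_i = Λ₀ + ∑_{j=1}^{i-1} φ_j φ_jᵀ` (so `Λ_1 = Λ₀`). Then for every `t ≥ 1`,
`log(det Λ_{t+1} / det Λ_1) ≤ ∑_{i=1}^t φ_iᵀ Λ_i⁻¹ φ_i
  ≤ 2 log(det Λ_{t+1} / det Λ_1)`. -/
theorem stmt_5 (d : ℕ) (Λ₀ : Matrix (Fin d) (Fin d) ℝ) (hΛ₀ : Λ₀.PosDef)
    (hΛ₀min : (Λ₀ - 1).PosSemidef)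
    (φ : ℕ → Fin d → ℝ)
    (hφ : ∀ i, 1 ≤ i → Real.sqrt (φ i ⬝ᵥ φ i) ≤ 1)
    (Λ : ℕ → Matrix (Fin d) (Fin d) ℝ)
    (hΛ : ∀ i, Λ i = Λ₀ + ∑ j ∈ Finset.Icc 1 (i - 1), Matrix.vecMulVec (φ j) (φ j))
    (t : ℕ) (ht : 1 ≤ t) :
    Real.log ((Λ (t + 1)).det / (Λ 1).det) ≤
        ∑ i ∈ Finset.Icc 1 t, φ i ⬝ᵥ (Λ i)⁻¹.mulVec (φ i) ∧
      ∑ i ∈ Finset.Icc 1 t, φ i ⬝ᵥ (Λ i)⁻¹.mulVec (φ i) ≤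
        2 * Real.log ((Λ (t + 1)).det / (Λ 1).det) := by
  exact stmt_5_general hΛ₀ (fun i hi => (dotProduct_inv_mulVec_le_dotProduct_self hΛ₀min _).trans
    ((Real.sqrt_le_one.1 (hφ i (Finset.mem_Icc.1 hi).1)).trans one_le_two)) hΛ
end

section
/- The sum of all per-episode bonuses satisfies Σ_{k=1}^K Σ_{h=1}^H √(φ_h^{kᵀ} (Λ_h^k)^{−1} φ_h^k) ≤ √(2 d H T log(T/(dH) + 1)), where T = KH. Consequently, for any β > 0, Σ_{k=1}^K Σ_{h=1}^H β √(φ_h^{kᵀ} (Λ_h^k)^{−1} φ_h^k) ≤ β √(2 d H T log(T/(dH) + 1)). -/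
open Matrix

theorem sum_sqrt_le_sqrt_card_mul_sum {ι : Type*} (s : Finset ι) (f : ι → ℝ)
    (hf : ∀ i ∈ s, 0 ≤ f i) :
    ∑ i ∈ s, √(f i) ≤ √(s.card * ∑ i ∈ s, f i) :=
  Real.le_sqrt_of_sq_le <| sq_sum_le_card_mul_sum_sq.trans_eq <| by
    rw [Finset.sum_congr rfl fun i hi => Real.sq_sqrt (hf i hi)]

theorem posSemidef_sum_vecMulVec_self {ι n : Type*} [Finite n] (s : Finset ι) (v : ι → n → ℝ) :
    (∑ i ∈ s, vecMulVec (v i) (v i)).PosSemidef :=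
  posSemidef_sum s fun i _ => by simpa using posSemidef_vecMulVec_self_star (v i)

section

variable {n : Type*} [Fintype n] [DecidableEq n]

theorem det_le_trace_div_card_pow [Nonempty n] {A : Matrix n n ℝ} (hA : A.PosSemidef) :
    A.det ≤ (A.trace / Fintype.card n) ^ Fintype.card n := by
  have hcard : (0 : ℝ) < Fintype.card n := mod_cast Fintype.card_pos
  have amgm := Real.geom_mean_le_arith_mean Finset.univ 1 hA.isHermitian.eigenvalues
    (by simp) (by simpa using hcard) (fun i _ => hA.eigenvalues_nonneg i)
  have hdet : A.det = ∏ i, hA.isHermitian.eigenvalues i := by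
    simpa using hA.isHermitian.det_eq_prod_eigenvalues
  have htrace : A.trace = ∑ i, hA.isHermitian.eigenvalues i := by
    simpa using hA.isHermitian.trace_eq_sum_eigenvalues
  simp only [Pi.one_apply, Real.rpow_one, one_mul, Finset.sum_const, Finset.card_univ,
    nsmul_eq_mul, mul_one, ← hdet, ← htrace] at amgm
  simpa only [Real.rpow_natCast] using
    (Real.rpow_inv_le_iff_of_pos hA.det_nonneg (div_nonneg hA.trace_nonneg hcard.le) hcard).1 amgm

theorem dotProduct_add_inv_mulVec_le {A P : Matrix n n ℝ} (hA : A.PosDef) (hP : P.PosSemidef)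
    (x : n → ℝ) : x ⬝ᵥ (A + P)⁻¹ *ᵥ x ≤ x ⬝ᵥ A⁻¹ *ᵥ x := by
  set y := (A + P)⁻¹ *ᵥ x with hy
  set z := A⁻¹ *ᵥ x with hz
  have hAPy : A *ᵥ y + P *ᵥ y = x := by
    rw [← add_mulVec, hy, mulVec_mulVec,
      mul_nonsing_inv _ (hA.add_posSemidef hP).det_pos.ne'.isUnit, one_mulVec]
  have hAz : A *ᵥ z = x := by
    rw [hz, mulVec_mulVec, mul_nonsing_inv _ hA.det_pos.ne'.isUnit, one_mulVec]
  have hzAy : z ⬝ᵥ A *ᵥ y = x ⬝ᵥ y := by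
    have hAT : Aᵀ = A := by simpa using hA.isHermitian.eq
    rw [dotProduct_mulVec, ← mulVec_transpose, hAT, hAz]
  have hyAy : y ⬝ᵥ A *ᵥ y ≤ x ⬝ᵥ y := by
    have hyPy : 0 ≤ y ⬝ᵥ P *ᵥ y := by simpa using hP.dotProduct_mulVec_nonneg y
    rw [← hAPy, add_dotProduct, dotProduct_comm _ y, dotProduct_comm _ y]
    exact le_add_of_nonneg_right hyPy
  have hsq : 0 ≤ (y - z) ⬝ᵥ A *ᵥ (y - z) := by
    simpa using hA.posSemidef.dotProduct_mulVec_nonneg (y - z)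
  rw [mulVec_sub, hAz, sub_dotProduct, dotProduct_sub, dotProduct_sub, hzAy,
    dotProduct_comm y x, dotProduct_comm z x] at hsq
  linarith

end

/-- The Gram matrix of the first `k` vectors of a sequence, regularized by `A`. The sequence is
indexed from `0`, so that the paper's `Λ_h^{k+1}` is `regularizedGram 1 (fun τ ↦ φ_h^{τ+1}) k`. -/
def regularizedGram {n : Type*} (A : Matrix n n ℝ) (v : ℕ → n → ℝ) (k : ℕ) : Matrix n n ℝ :=
  A + ∑ τ ∈ Finset.range k, vecMulVec (v τ) (v τ)

namespace regularizedGram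

variable {n : Type*} {A : Matrix n n ℝ} {v : ℕ → n → ℝ}

theorem zero_eq : regularizedGram A v 0 = A := by
  simp [regularizedGram]

theorem succ_eq (k : ℕ) :
    regularizedGram A v (k + 1) = regularizedGram A v k + vecMulVec (v k) (v k) := by
  rw [regularizedGram, Finset.sum_range_succ, ← add_assoc, regularizedGram]

theorem posDef [Finite n] (hA : A.PosDef) (k : ℕ) : (regularizedGram A v k).PosDef :=
  hA.add_posSemidef (posSemidef_sum_vecMulVec_self (Finset.range k) v)

variable [Fintype n]

theorem trace_eq (k : ℕ) :
    (regularizedGram A v k).trace = A.trace + ∑ τ ∈ Finset.range k, v τ ⬝ᵥ v τ := by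
  simp only [regularizedGram, trace_add, trace_sum, trace_vecMulVec]

variable [DecidableEq n]

theorem dotProduct_inv_mulVec_nonneg (hA : A.PosDef) (k : ℕ) (x : n → ℝ) :
    0 ≤ x ⬝ᵥ (regularizedGram A v k)⁻¹ *ᵥ x := by
  simpa using (posDef hA k).inv.posSemidef.dotProduct_mulVec_nonneg x

theorem dotProduct_inv_mulVec_le (hA : A.PosDef) (k : ℕ) (x : n → ℝ) :
    x ⬝ᵥ (regularizedGram A v k)⁻¹ *ᵥ x ≤ x ⬝ᵥ A⁻¹ *ᵥ x :=
  dotProduct_add_inv_mulVec_le hA (posSemidef_sum_vecMulVec_self (Finset.range k) v) x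

theorem log_det_succ (hA : A.PosDef) (k : ℕ) :
    Real.log (regularizedGram A v (k + 1)).det = Real.log (regularizedGram A v k).det +
      Real.log (1 + v k ⬝ᵥ (regularizedGram A v k)⁻¹ *ᵥ v k) := by
  have hdet : (regularizedGram A v k).det ≠ 0 := (posDef hA k).det_pos.ne'
  have hnonneg := dotProduct_inv_mulVec_nonneg (v := v) hA k (v k)
  rw [succ_eq, det_add_vecMulVec hdet.isUnit, Real.log_mul hdet (by positivity)]

theorem sum_dotProduct_inv_mulVec_le_log_det (hA : A.PosDef) (K : ℕ)
    (hv : ∀ k < K, v k ⬝ᵥ A⁻¹ *ᵥ v k ≤ 2) :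
    ∑ k ∈ Finset.range K, v k ⬝ᵥ (regularizedGram A v k)⁻¹ *ᵥ v k ≤
      2 * (Real.log (regularizedGram A v K).det - Real.log A.det) :=
  calc
    _ ≤ ∑ k ∈ Finset.range K,
        2 * Real.log (1 + v k ⬝ᵥ (regularizedGram A v k)⁻¹ *ᵥ v k) :=
      Finset.sum_le_sum fun k hk => le_two_mul_log_one_add (dotProduct_inv_mulVec_nonneg hA k _)
        ((dotProduct_inv_mulVec_le hA k _).trans (hv k (Finset.mem_range.1 hk)))
    _ = 2 * ∑ k ∈ Finset.range K, (Real.log (regularizedGram A v (k + 1)).det -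
        Real.log (regularizedGram A v k).det) := by
      simp only [log_det_succ hA, add_sub_cancel_left, Finset.mul_sum]
    _ = _ := by
      rw [Finset.sum_range_sub fun k => Real.log (regularizedGram A v k).det, zero_eq]

variable [Nonempty n] {r L : ℝ}

theorem log_det_smul_one_le (hr : 0 < r) (K : ℕ) (hv : ∀ k < K, v k ⬝ᵥ v k ≤ L ^ 2) :
    Real.log (regularizedGram (r • 1) v K).det ≤
      Fintype.card n * Real.log (r + K * L ^ 2 / Fintype.card n) := by
  have hpos := posDef (v := v) (PosDef.one.smul hr) K
  have htrace : (regularizedGram (r • 1) v K).trace ≤ Fintype.card n * r + K * L ^ 2 := by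
    rw [trace_eq, trace_smul, trace_one, smul_eq_mul, mul_comm r]
    gcongr
    simpa using Finset.sum_le_card_nsmul (Finset.range K) _ (L ^ 2)
      fun k hk => hv k (Finset.mem_range.1 hk)
  rw [← Real.log_pow]
  refine Real.log_le_log hpos.det_pos ((det_le_trace_div_card_pow hpos.posSemidef).trans ?_)
  have htrace_nonneg := hpos.posSemidef.trace_nonneg
  gcongr
  rw [div_le_iff₀ (by positivity)]
  refine htrace.trans_eq ?_
  field_simp

theorem sum_dotProduct_inv_mulVec_le (hr : 0 < r) (hL : L ^ 2 ≤ 2 * r) (K : ℕ)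
    (hv : ∀ k < K, v k ⬝ᵥ v k ≤ L ^ 2) :
    ∑ k ∈ Finset.range K, v k ⬝ᵥ (regularizedGram (r • 1) v k)⁻¹ *ᵥ v k ≤
      2 * (Fintype.card n * Real.log (K * L ^ 2 / (Fintype.card n * r) + 1)) := by
  have hle_two (k : ℕ) (hk : k < K) : v k ⬝ᵥ (r • (1 : Matrix n n ℝ))⁻¹ *ᵥ v k ≤ 2 := by
    rw [inv_eq_left_inv (B := r⁻¹ • 1) (by simp [smul_smul, hr.ne']), smul_mulVec, one_mulVec,
      dotProduct_smul, smul_eq_mul, inv_mul_le_iff₀ hr, mul_comm r]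
    exact (hv k hk).trans hL
  have hlog : Real.log (r + K * L ^ 2 / Fintype.card n) =
      Real.log (K * L ^ 2 / (Fintype.card n * r) + 1) + Real.log r := by
    rw [← Real.log_mul (by positivity) hr.ne']
    congr 1
    field_simp
    ring
  have hdet : Real.log (r • (1 : Matrix n n ℝ)).det = Fintype.card n * Real.log r := by
    rw [det_smul, det_one, mul_one, Real.log_pow]
  refine (sum_dotProduct_inv_mulVec_le_log_det (PosDef.one.smul hr) K hle_two).trans ?_
  have hlog_det := log_det_smul_one_le hr K hv
  rw [hlog, mul_add] at hlog_det
  linarith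

theorem sum_sum_sqrt_dotProduct_inv_mulVec_le {ι : Type*} (s : Finset ι) {φ : ι → ℕ → n → ℝ}
    (hr : 0 < r) (hL : L ^ 2 ≤ 2 * r) (K : ℕ) (hφ : ∀ h ∈ s, ∀ k < K, φ h k ⬝ᵥ φ h k ≤ L ^ 2) :
    ∑ h ∈ s, ∑ k ∈ Finset.range K, √(φ h k ⬝ᵥ (regularizedGram (r • 1) (φ h) k)⁻¹ *ᵥ φ h k) ≤
      √(2 * Fintype.card n * s.card * (K * s.card) *
        Real.log (K * L ^ 2 / (Fintype.card n * r) + 1)) := by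
  rw [← Finset.sum_product']
  refine (sum_sqrt_le_sqrt_card_mul_sum _ _ fun p _ =>
    dotProduct_inv_mulVec_nonneg (PosDef.one.smul hr) _ _).trans (Real.sqrt_le_sqrt ?_)
  rw [Finset.sum_product, Finset.card_product, Finset.card_range]
  calc
    _ ≤ ((s.card * K : ℕ) : ℝ) * ∑ h ∈ s,
        2 * (Fintype.card n * Real.log (K * L ^ 2 / (Fintype.card n * r) + 1)) := by
      gcongr with h hh
      exact sum_dotProduct_inv_mulVec_le hr hL K (hφ h hh)
    _ = _ := by
      rw [Finset.sum_const, nsmul_eq_mul]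
      push_cast
      ring

end regularizedGram

theorem sum_Icc_one_eq_sum_range {M : Type*} [AddCommMonoid M] (f : ℕ → M) (n : ℕ) :
    ∑ i ∈ Finset.Icc 1 n, f i = ∑ i ∈ Finset.range n, f (i + 1) := by
  rw [Finset.range_eq_Ico, Finset.sum_Ico_add' f 0 n 1, zero_add, Finset.Ico_add_one_right_eq_Icc]

/-- With `Λ_h^k = I + ∑_{τ=1}^{k-1} φ_h^τ (φ_h^τ)ᵀ`, `‖φ_h^k‖₂ ≤ 1`
and `T = KH`, the sum of per-episode bonuses satisfies
`∑_{k=1}^K ∑_{h=1}^H √(φ_h^kᵀ (Λ_h^k)⁻¹ φ_h^k) ≤ √(2 d H T log(T/(dH)+1))`,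
and consequently for any `β > 0` the `β`-scaled sum is at most
`β √(2 d H T log(T/(dH)+1))`. -/
theorem stmt_7 (d H K : ℕ) (hd : 1 ≤ d) (hH : 1 ≤ H) (hK : 1 ≤ K)
    (φ : ℕ → ℕ → Fin d → ℝ)
    (hφ : ∀ h ∈ Finset.Icc 1 H, ∀ k ∈ Finset.Icc 1 K,
      Real.sqrt (φ h k ⬝ᵥ φ h k) ≤ 1)
    (Λ : ℕ → ℕ → Matrix (Fin d) (Fin d) ℝ)
    (hΛ : ∀ h k, Λ h k = (1 : Matrix (Fin d) (Fin d) ℝ) +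
      ∑ τ ∈ Finset.Icc 1 (k - 1), Matrix.vecMulVec (φ h τ) (φ h τ))
    (T : ℕ) (hT : T = K * H) :
    (∑ k ∈ Finset.Icc 1 K, ∑ h ∈ Finset.Icc 1 H,
        Real.sqrt (φ h k ⬝ᵥ (Λ h k)⁻¹.mulVec (φ h k)) ≤
      Real.sqrt (2 * d * H * T * Real.log ((T : ℝ) / (d * H) + 1))) ∧
    ∀ β : ℝ, 0 < β →
      ∑ k ∈ Finset.Icc 1 K, ∑ h ∈ Finset.Icc 1 H,
          β * Real.sqrt (φ h k ⬝ᵥ (Λ h k)⁻¹.mulVec (φ h k)) ≤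
        β * Real.sqrt (2 * d * H * T * Real.log ((T : ℝ) / (d * H) + 1)) := by
  have : NeZero d := ⟨by omega⟩
  have hφ_sq (h : ℕ) (hh : h ∈ Finset.Icc 1 H) (k : ℕ) (hk : k < K) :
      φ h (k + 1) ⬝ᵥ φ h (k + 1) ≤ 1 ^ 2 :=
    (Real.sqrt_le_left zero_le_one).1 (hφ h hh (k + 1) (by rw [Finset.mem_Icc]; omega))
  have hΛ_gram (h k : ℕ) :
      Λ h (k + 1) = regularizedGram ((1 : ℝ) • 1) (fun τ => φ h (τ + 1)) k := by
    rw [hΛ, Nat.add_sub_cancel, sum_Icc_one_eq_sum_range, one_smul, regularizedGram]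
  have hT_div : (T : ℝ) / (d * H) = K / d := by
    rw [hT]
    push_cast
    field_simp
  have bonus_sum_le : ∑ k ∈ Finset.Icc 1 K, ∑ h ∈ Finset.Icc 1 H,
      √(φ h k ⬝ᵥ (Λ h k)⁻¹ *ᵥ φ h k) ≤ √(2 * d * H * T * Real.log ((T : ℝ) / (d * H) + 1)) := by
    rw [Finset.sum_comm, hT_div, hT]
    simpa [sum_Icc_one_eq_sum_range (n := K), hΛ_gram] using
      regularizedGram.sum_sum_sqrt_dotProduct_inv_mulVec_le _ one_pos (by norm_num) K hφ_sq
  refine ⟨bonus_sum_le, fun β hβ => ?_⟩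
  simp only [← Finset.mul_sum]
  exact mul_le_mul_of_nonneg_left bonus_sum_le hβ.le
end

section
/- With λ = 1, for any grid of indices 1 = t_1 < t_2 < ⋯ < t_{B+1} = K+1, the number of indices b ∈ [B] such that log det(Λ^{t_{b+1}}) − log det(Λ^{t_b}) > 2 log 2 is at most d log(K/d + 1)/(2 log 2). -/
open Matrix

/-!
The log-determinant of `c • 1 + ∑ φ φᴴ` grows when vectors are added, so its increments along a
chain of index sets are nonnegative and telescope. Their total is controlled by the arithmetic-mean
geometric-mean inequality applied to the eigenvalues, which bounds the determinant by the trace, and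
each increment above the threshold `ε` uses up at least `ε` of that total.
-/

section Increments

variable {M : Type*}

theorem card_filter_lt_nsmul_le_sum [AddCommMonoid M] [PartialOrder M] [IsOrderedAddMonoid M]
    [DecidableLT M] {ι : Type*} {s : Finset ι} {f : ι → M} (hf : ∀ i ∈ s, 0 ≤ f i) (ε : M) :
    (s.filter fun i => ε < f i).card • ε ≤ ∑ i ∈ s, f i :=
  calc
    (s.filter fun i => ε < f i).card • ε ≤ ∑ i ∈ s with ε < f i, f i :=
      Finset.card_nsmul_le_sum _ _ _ fun _ hi => (Finset.mem_filter.1 hi).2.le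
    _ ≤ ∑ i ∈ s, f i :=
      Finset.sum_le_sum_of_subset_of_nonneg (Finset.filter_subset _ _) fun i hi _ => hf i hi

theorem card_filter_lt_increment_nsmul_le_sub [AddCommGroup M] [PartialOrder M]
    [IsOrderedAddMonoid M] [DecidableLT M] {f : ℕ → M} {a b : ℕ} (hab : a ≤ b)
    (hf : ∀ i ∈ Finset.Ico a b, f i ≤ f (i + 1)) (ε : M) :
    ((Finset.Ico a b).filter fun i => ε < f (i + 1) - f i).card • ε ≤ f b - f a :=
  (card_filter_lt_nsmul_le_sum (fun i hi => sub_nonneg.2 (hf i hi)) ε).trans_eq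
    (Finset.sum_Ico_sub f hab)

end Increments

theorem prod_le_sum_div_card_pow_card {ι : Type*} {s : Finset ι} {x : ι → ℝ}
    (hx : ∀ i ∈ s, 0 ≤ x i) : ∏ i ∈ s, x i ≤ ((∑ i ∈ s, x i) / s.card) ^ s.card := by
  obtain rfl | hs := s.eq_empty_or_nonempty
  · simp
  have prod_nonneg : 0 ≤ ∏ i ∈ s, x i := Finset.prod_nonneg hx
  have root_le_mean : (∏ i ∈ s, x i) ^ (s.card : ℝ)⁻¹ ≤ (∑ i ∈ s, x i) / s.card := by
    simpa using Real.geom_mean_le_arith_mean s 1 x (by simp) (by simpa) hx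
  calc
    ∏ i ∈ s, x i = ((∏ i ∈ s, x i) ^ (s.card : ℝ)⁻¹) ^ s.card :=
      (Real.rpow_inv_natCast_pow prod_nonneg hs.card_ne_zero).symm
    _ ≤ ((∑ i ∈ s, x i) / s.card) ^ s.card :=
      pow_le_pow_left₀ (Real.rpow_nonneg prod_nonneg _) root_le_mean _

section Determinant

open scoped ComplexOrder MatrixOrder

variable {n 𝕜 : Type*} [Fintype n] [DecidableEq n] [RCLike 𝕜] {A B : Matrix n n 𝕜}

theorem one_le_det_of_one_le (hA : 1 ≤ A) : 1 ≤ A.det := by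
  have hA_herm : A.IsHermitian := (zero_le_one.trans hA).posSemidef.isHermitian
  have one_le_eigenvalues (i : n) : 1 ≤ hA_herm.eigenvalues i :=
    (algebraMap_le_iff_le_spectrum (r := (1 : ℝ)) (a := A)).1 (by simpa using hA) _
      (hA_herm.eigenvalues_mem_spectrum_real i)
  rw [hA_herm.det_eq_prod_eigenvalues]
  exact_mod_cast Finset.one_le_prod fun i _ => one_le_eigenvalues i

theorem det_le_det_of_nonneg_of_le (hA : 0 ≤ A) (hAB : A ≤ B) : A.det ≤ B.det := by
  have hB : 0 ≤ B.det := (hA.trans hAB).posSemidef.det_nonneg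
  by_cases hdet : A.det = 0
  · rwa [hdet]
  have hA_pos : A.PosDef := hA.posSemidef.posDef_iff_det_ne_zero.2 hdet
  obtain ⟨C, hC⟩ := CStarAlgebra.nonneg_iff_eq_star_mul_self.1 (sub_nonneg.2 hAB)
  have one_le : 1 ≤ (1 + C * A⁻¹ * Cᴴ).det :=
    one_le_det_of_one_le <| le_add_of_nonneg_right
      (hA_pos.inv.posSemidef.mul_mul_conjTranspose_same C).nonneg
  calc
    A.det ≤ A.det * (1 + C * A⁻¹ * Cᴴ).det := le_mul_of_one_le_right hA_pos.det_pos.le one_le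
    _ = (A + Cᴴ * C).det := (det_add_mul Cᴴ C ((isUnit_iff_isUnit_det A).1 hA_pos.isUnit)).symm
    _ = B.det := by rw [← star_eq_conjTranspose, ← hC, add_sub_cancel]

theorem re_det_le_re_trace_div_card_pow_card (hA : A.PosSemidef) :
    RCLike.re A.det ≤ (RCLike.re A.trace / Fintype.card n) ^ Fintype.card n := by
  rw [hA.isHermitian.det_eq_prod_eigenvalues, hA.isHermitian.trace_eq_sum_eigenvalues]
  exact_mod_cast prod_le_sum_div_card_pow_card (s := Finset.univ) fun i _ => hA.eigenvalues_nonneg i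

end Determinant

section RegularizedCovariance

open scoped ComplexOrder MatrixOrder

variable {ι n 𝕜 : Type*} [DecidableEq n] [RCLike 𝕜]

/-- The covariance matrix `c I + ∑ τ ∈ s, φ τ (φ τ)ᴴ` of ridge regression with feature vectors `φ`.
Indexing by a finite set, rather than by a number of rounds, makes monotonicity in the data an
instance of `Monotone`. -/
def regularizedCovariance (c : ℝ) (φ : ι → n → 𝕜) (s : Finset ι) : Matrix n n 𝕜 :=
  c • 1 + ∑ τ ∈ s, vecMulVec (φ τ) (star (φ τ))

variable {c : ℝ} {φ : ι → n → 𝕜} {s s' : Finset ι}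

theorem regularizedCovariance_empty : regularizedCovariance c φ ∅ = c • 1 := by
  simp [regularizedCovariance]

theorem regularizedCovariance_mono [Finite n] : Monotone (regularizedCovariance c φ) :=
  fun _ _ hs => add_le_add_right (Finset.sum_le_sum_of_subset_of_nonneg hs fun τ _ _ =>
    (posSemidef_vecMulVec_self_star (φ τ)).nonneg) _

theorem regularizedCovariance_posDef [Finite n] (hc : 0 < c) :
    (regularizedCovariance c φ s).PosDef :=
  (PosDef.one.smul hc).add_posSemidef <|
    posSemidef_sum _ fun τ _ => posSemidef_vecMulVec_self_star (φ τ)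

variable [Fintype n]

theorem re_trace_regularizedCovariance :
    RCLike.re (regularizedCovariance c φ s).trace =
      c * Fintype.card n + ∑ τ ∈ s, RCLike.re (φ τ ⬝ᵥ star (φ τ)) := by
  simp [regularizedCovariance, trace_sum, trace_vecMulVec, RCLike.smul_re]

theorem re_det_regularizedCovariance_pos (hc : 0 < c) :
    0 < RCLike.re (regularizedCovariance c φ s).det :=
  (RCLike.pos_iff.1 (regularizedCovariance_posDef hc).det_pos).1

theorem log_det_regularizedCovariance_mono (hc : 0 < c) :
    Monotone fun s => Real.log (RCLike.re (regularizedCovariance c φ s).det) := fun _ _ hs =>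
  Real.log_le_log (re_det_regularizedCovariance_pos hc) <|
    RCLike.re_le_re <| det_le_det_of_nonneg_of_le
      (regularizedCovariance_posDef hc).posSemidef.nonneg (regularizedCovariance_mono hs)

theorem log_det_regularizedCovariance_empty :
    Real.log (RCLike.re (regularizedCovariance c φ ∅).det) = Fintype.card n * Real.log c := by
  rw [regularizedCovariance_empty, det_smul_of_tower, det_one, RCLike.smul_re, RCLike.one_re,
    mul_one, Real.log_pow]

variable [Nonempty n] {L : ℝ}

theorem re_det_regularizedCovariance_le (hc : 0 < c)
    (hφ : ∀ τ ∈ s, √(RCLike.re (φ τ ⬝ᵥ star (φ τ))) ≤ L) :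
    RCLike.re (regularizedCovariance c φ s).det ≤
      (c + s.card * L ^ 2 / Fintype.card n) ^ Fintype.card n := by
  have hcov : (regularizedCovariance c φ s).PosSemidef :=
    (regularizedCovariance_posDef hc).posSemidef
  have re_trace_nonneg : 0 ≤ RCLike.re (regularizedCovariance c φ s).trace :=
    (RCLike.nonneg_iff.1 hcov.trace_nonneg).1
  have sum_le : ∑ τ ∈ s, RCLike.re (φ τ ⬝ᵥ star (φ τ)) ≤ s.card * L ^ 2 := by
    rw [← nsmul_eq_mul]
    exact Finset.sum_le_card_nsmul _ _ _ fun τ hτ => (Real.sqrt_le_iff.1 (hφ τ hτ)).2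
  calc
    RCLike.re (regularizedCovariance c φ s).det
      ≤ (RCLike.re (regularizedCovariance c φ s).trace / Fintype.card n) ^ Fintype.card n :=
        re_det_le_re_trace_div_card_pow_card hcov
    _ ≤ ((c * Fintype.card n + s.card * L ^ 2) / Fintype.card n) ^ Fintype.card n := by
        gcongr
        rw [re_trace_regularizedCovariance]
        gcongr
    _ = (c + s.card * L ^ 2 / Fintype.card n) ^ Fintype.card n := by
        rw [add_div, mul_div_cancel_right₀ c (by simp)]

theorem log_det_regularizedCovariance_sub_le (hc : 0 < c)
    (hφ : ∀ τ ∈ s, √(RCLike.re (φ τ ⬝ᵥ star (φ τ))) ≤ L) :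
    Real.log (RCLike.re (regularizedCovariance c φ s).det) -
        Real.log (RCLike.re (regularizedCovariance c φ s').det) ≤
      Fintype.card n * Real.log (s.card * L ^ 2 / (c * Fintype.card n) + 1) := by
  have log_le : Real.log (RCLike.re (regularizedCovariance c φ s).det) ≤
      Fintype.card n * Real.log (c + s.card * L ^ 2 / Fintype.card n) := by
    rw [← Real.log_pow]
    exact Real.log_le_log (re_det_regularizedCovariance_pos hc)
      (re_det_regularizedCovariance_le hc hφ)
  have le_log : Fintype.card n * Real.log c ≤
      Real.log (RCLike.re (regularizedCovariance c φ s').det) :=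
    log_det_regularizedCovariance_empty.symm.trans_le
      (log_det_regularizedCovariance_mono hc (Finset.empty_subset s'))
  calc
    _ ≤ Fintype.card n * Real.log (c + s.card * L ^ 2 / Fintype.card n) -
        Fintype.card n * Real.log c := sub_le_sub log_le le_log
    _ = Fintype.card n * Real.log ((c + s.card * L ^ 2 / Fintype.card n) / c) := by
        rw [Real.log_div (by positivity) hc.ne', mul_sub]
    _ = _ := by
        rw [add_div, div_self hc.ne', div_div, mul_comm (Fintype.card n : ℝ) c, add_comm]

theorem stmt_9_general {ε : ℝ} (hc : 0 < c) (hε : 0 < ε) {B : ℕ} {s : ℕ → Finset ι}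
    (hs : ∀ b ∈ Finset.Icc 1 B, s b ⊆ s (b + 1))
    (hφ : ∀ τ ∈ s (B + 1), √(RCLike.re (φ τ ⬝ᵥ star (φ τ))) ≤ L) :
    (((Finset.Icc 1 B).filter fun b =>
        ε < Real.log (RCLike.re (regularizedCovariance c φ (s (b + 1))).det) -
          Real.log (RCLike.re (regularizedCovariance c φ (s b)).det)).card : ℝ) ≤
      Fintype.card n * Real.log ((s (B + 1)).card * L ^ 2 / (c * Fintype.card n) + 1) / ε := by
  let logDet (b : ℕ) : ℝ := Real.log (RCLike.re (regularizedCovariance c φ (s b)).det)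
  rw [← Finset.Ico_add_one_right_eq_Icc] at hs ⊢
  have logDet_le_succ : ∀ b ∈ Finset.Ico 1 (B + 1), logDet b ≤ logDet (b + 1) :=
    fun b hb => log_det_regularizedCovariance_mono hc (hs b hb)
  rw [le_div_iff₀ hε, ← nsmul_eq_mul]
  calc
    _ ≤ logDet (B + 1) - logDet 1 :=
      card_filter_lt_increment_nsmul_le_sub (Nat.le_add_left 1 B) logDet_le_succ ε
    _ ≤ _ := log_det_regularizedCovariance_sub_le hc hφ

end RegularizedCovariance

/-- With `λ = 1` and any grid `1 = t_1 < t_2 < ⋯ < t_{B+1} = K+1`,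
the number of indices `b ∈ [B]` with
`log det Λ^{t_{b+1}} - log det Λ^{t_b} > 2 log 2` is at most
`d log(K/d + 1) / (2 log 2)`. -/
theorem stmt_9 (d K B : ℕ) (hd : 1 ≤ d)
    (φ : ℕ → Fin d → ℝ)
    (hφ : ∀ τ ∈ Finset.Icc 1 K, Real.sqrt (φ τ ⬝ᵥ φ τ) ≤ 1)
    (Λ : ℕ → Matrix (Fin d) (Fin d) ℝ)
    (hΛ : ∀ k, Λ k = (1 : Matrix (Fin d) (Fin d) ℝ) +
      ∑ τ ∈ Finset.Icc 1 (k - 1), Matrix.vecMulVec (φ τ) (φ τ))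
    (t : ℕ → ℕ) (ht1 : t 1 = 1) (htB : t (B + 1) = K + 1)
    (hmono : ∀ b ∈ Finset.Icc 1 B, t b < t (b + 1)) :
    (((Finset.Icc 1 B).filter (fun b =>
        2 * Real.log 2 <
          Real.log (Λ (t (b + 1))).det - Real.log (Λ (t b)).det)).card : ℝ)
      ≤ d * Real.log ((K : ℝ) / d + 1) / (2 * Real.log 2) := by
  have : Nonempty (Fin d) := ⟨⟨0, hd⟩⟩
  simpa [hΛ, htB, regularizedCovariance] using stmt_9_general (c := 1) (L := 1) (φ := φ)
    (s := fun b => Finset.Icc 1 (t b - 1)) one_pos (by positivity : 0 < 2 * Real.log 2)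
    (fun b hb => Finset.Icc_subset_Icc_right (Nat.sub_le_sub_right (hmono b hb).le 1))
    (by simpa [htB] using hφ)
end
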